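/- arXiv:1801.06429 — 4 statements merged into one kernel-verified Lean document; each statement's English description precedes it below -/
import Mathlib

section
/- Let M be a 6×6 real symplectic matrix whose characteristic polynomial is divisible by (X−1)². Then there exist T₁, T₂ ∈ ℂ such that the characteristic polynomial of M, regarded over ℂ, factors as (X−1)²(X²−T₁X+1)(X²−T₂X+1), and T₁, T₂ are exactly the two roots of the quadratic q(s) = s² − (a−2)s + (b−2a+1); in particular T₁+T₂ = a−2 and T₁T₂ = b−2a+1 are real. -/
open Polynomial

/-- The standard `6 × 6` symplectic matrix `[[0, I₃], [-I₃, 0]]`. -/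
def J6 : Matrix (Fin 6) (Fin 6) ℝ :=
  Matrix.of fun i j => if (j : ℕ) = (i : ℕ) + 3 then 1 else if (i : ℕ) = (j : ℕ) + 3 then -1 else 0


/-- Splitting the six indices into two halves. -/
def e6 : Fin 3 ⊕ Fin 3 ≃ Fin 6 := finSumFinEquiv

lemma e6_inl (i : Fin 3) : ((e6 (Sum.inl i) : Fin 6) : ℕ) = i := rfl

lemma e6_inr (i : Fin 3) : ((e6 (Sum.inr i) : Fin 6) : ℕ) = 3 + i := rfl

lemma J6_sub : J6.submatrix e6 e6 = -Matrix.J (Fin 3) ℝ := by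
  ext (i | i) (j | j) <;> fin_cases i <;> fin_cases j <;>
    simp [J6, Matrix.J, e6_inl, e6_inr]

lemma J6_sq : J6 * J6 = -1 := by
  ext i j
  fin_cases i <;> fin_cases j <;> simp [J6, Matrix.mul_apply, Fin.sum_univ_succ]

lemma det_symp (M : Matrix (Fin 6) (Fin 6) ℝ) (hsymp : M.transpose * J6 * M = J6) : M.det = 1 := by
  rw [← Matrix.det_submatrix_equiv_self e6 M]
  apply SymplecticGroup.det_eq_one
  rw [SymplecticGroup.mem_iff']
  have h := congrArg (fun A => A.submatrix e6 e6) hsymp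
  rw [← Matrix.submatrix_mul_equiv _ _ _ e6, ← Matrix.submatrix_mul_equiv _ _ _ e6, J6_sub] at h
  simpa using h

lemma rev_symp (M : Matrix (Fin 6) (Fin 6) ℝ) (hsymp : M.transpose * J6 * M = J6) :
    M.charpoly.reverse = M.charpoly := by
  have hd := det_symp M hsymp
  have hinv : M⁻¹ = (-J6 * M.transpose) * J6 := by
    apply Matrix.inv_eq_left_inv
    calc (-J6 * M.transpose) * J6 * M = -J6 * (M.transpose * J6 * M) := by
          simp only [Matrix.mul_assoc]
      _ = 1 := by rw [hsymp, Matrix.neg_mul, J6_sq, neg_neg]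
  have h1 : M⁻¹.charpoly = M.charpoly := by
    rw [hinv, Matrix.charpoly_mul_comm, ← Matrix.mul_assoc, Matrix.mul_neg, J6_sq, neg_neg,
      Matrix.one_mul, Matrix.charpoly_transpose]
  have hu : IsUnit M := by rw [Matrix.isUnit_iff_isUnit_det, hd]; exact isUnit_one
  have h2 := Matrix.charpoly_inv M hu
  rw [hd, h1] at h2
  rw [Matrix.reverse_charpoly]
  simpa [Even.neg_one_pow (show Even 6 by decide)] using h2.symm

lemma coeff_four (M : Matrix (Fin 6) (Fin 6) ℝ) :
    M.charpoly.coeff 4 = ∑ i : Fin 6, ∑ j : Fin 6,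
      if i < j then M i i * M j j - M i j * M j i else 0 := by
  have h := Matrix.charpoly_coeff_eq_sum_minors M 2 (by simp)
  have h4 : Fintype.card (Fin 6) - 2 = 4 := by simp
  rw [h4] at h
  rw [h, neg_one_sq, one_mul, ← Fintype.sum_prod_type', ← Finset.sum_filter]
  symm
  refine Finset.sum_bij (fun p _ => {p.1, p.2}) ?_ ?_ ?_ ?_
  · rintro ⟨i, j⟩ hij
    simp only [Finset.mem_filter, Finset.mem_univ, true_and] at hij
    simp [Finset.mem_powersetCard, Finset.card_pair hij.ne]
  · decide
  · decide
  · rintro ⟨i, j⟩ hij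
    simp only [Finset.mem_filter, Finset.mem_univ, true_and] at hij
    have hne : i ≠ j := hij.ne
    let f : Fin 2 → ({i, j} : Finset (Fin 6)) := ![⟨i, by simp⟩, ⟨j, by simp⟩]
    have hf : Function.Bijective f := by
      constructor
      · intro x y
        fin_cases x <;> fin_cases y <;> simp [f, hne, hne.symm]
      · rintro ⟨x, hx⟩
        rcases Finset.mem_insert.1 hx with h | h
        · exact ⟨0, by simp [f, h]⟩
        · exact ⟨1, by simp [f, Finset.mem_singleton.1 h]⟩
    rw [← Matrix.det_submatrix_equiv_self (Equiv.ofBijective f hf), Matrix.det_fin_two]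
    simp [f]

lemma charpoly_form (M : Matrix (Fin 6) (Fin 6) ℝ)
    (hsymp : M.transpose * J6 * M = J6)
    (hdvd : (X - 1) ^ 2 ∣ M.charpoly)
    (a b : ℝ)
    (ha : a = Matrix.trace M)
    (hb : b = M.charpoly.coeff 4) :
    M.charpoly = X ^ 6 - C a * X ^ 5 + C b * X ^ 4 + C (2 * a - 2 * b - 2) * X ^ 3
      + C b * X ^ 2 - C a * X + 1 := by
  have hdeg : M.charpoly.natDegree = 6 := by simp [Matrix.charpoly_natDegree_eq_dim]
  have hrev := rev_symp M hsymp
  have hc : ∀ k ≤ 6, M.charpoly.coeff (6 - k) = M.charpoly.coeff k := by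
    intro k hk
    conv_rhs => rw [← hrev, coeff_reverse, hdeg, revAt_le hk]
  have h6 : M.charpoly.coeff 6 = 1 := by
    have := M.charpoly_monic.coeff_natDegree
    rwa [hdeg] at this
  have h5 : M.charpoly.coeff 5 = -a := by
    have := Matrix.trace_eq_neg_charpoly_coeff M
    simp at this
    linarith
  have h0 := hc 0 (by norm_num)
  have h1 := hc 1 (by norm_num)
  have h2 := hc 2 (by norm_num)
  norm_num at h0 h1 h2
  have hsum := M.charpoly.as_sum_range_C_mul_X_pow
  rw [hdeg] at hsum
  simp only [Finset.sum_range_succ, Finset.sum_range_zero] at hsum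
  rw [h6] at h0
  rw [h5] at h1
  rw [← hb] at h2
  rw [← h0, ← h1, ← h2, h5, h6, ← hb] at hsum
  have hev : M.charpoly.eval 1 = 0 := by
    obtain ⟨r, hr⟩ := hdvd
    simp [hr]
  have h3 : M.charpoly.coeff 3 = 2 * a - 2 * b - 2 := by
    rw [hsum] at hev
    simp only [eval_add, eval_mul, eval_pow, eval_C, eval_X, eval_zero] at hev
    linarith
  rw [h3] at hsum
  rw [hsum]
  simp only [map_neg, map_one]
  ring

/-- For a `6 × 6` real symplectic matrix `M` whose characteristic polynomial is divisible by
`(X-1)²`, the characteristic polynomial factors over `ℂ` as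
`(X-1)²(X² - T₁X + 1)(X² - T₂X + 1)`, where `T₁, T₂` are exactly the two roots of
`q(s) = s² - (a-2)s + (b-2a+1)`; in particular `T₁ + T₂ = a - 2` and `T₁T₂ = b - 2a + 1`
are real. -/
theorem charpoly_factorization_symplectic
    (M : Matrix (Fin 6) (Fin 6) ℝ)
    (hsymp : M.transpose * J6 * M = J6)
    (hdvd : (X - 1) ^ 2 ∣ M.charpoly)
    (a b : ℝ)
    (ha : a = Matrix.trace M)
    (hb : b = ∑ i : Fin 6, ∑ j : Fin 6,
      if i < j then M i i * M j j - M i j * M j i else 0) :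
    ∃ T₁ T₂ : ℂ,
      M.charpoly.map (algebraMap ℝ ℂ)
        = (X - 1) ^ 2 * (X ^ 2 - C T₁ * X + 1) * (X ^ 2 - C T₂ * X + 1) ∧
      T₁ + T₂ = (a : ℂ) - 2 ∧
      T₁ * T₂ = (b : ℂ) - 2 * a + 1 ∧
      (∀ s : ℂ, s ^ 2 - ((a : ℂ) - 2) * s + ((b : ℂ) - 2 * a + 1) = 0 ↔ (s = T₁ ∨ s = T₂)) := by
  have hform := charpoly_form M hsymp hdvd a b ha (hb.trans (coeff_four M).symm)
  obtain ⟨d, hd⟩ := IsAlgClosed.exists_pow_nat_eq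
    (((a : ℂ) - 2) ^ 2 - 4 * ((b : ℂ) - 2 * a + 1)) (n := 2) (by norm_num)
  have hS : (((a : ℂ) - 2) + d) / 2 + (((a : ℂ) - 2) - d) / 2 = (a : ℂ) - 2 := by ring
  have hP : ((((a : ℂ) - 2) + d) / 2) * ((((a : ℂ) - 2) - d) / 2) = (b : ℂ) - 2 * a + 1 := by
    linear_combination (-1 / 4 : ℂ) * hd
  generalize (((a : ℂ) - 2) + d) / 2 = T₁ at hS hP
  generalize (((a : ℂ) - 2) - d) / 2 = T₂ at hS hP
  refine ⟨T₁, T₂, ?_, hS, hP, ?_⟩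
  · have hC2 : (C (2 : ℂ) : ℂ[X]) = 2 := rfl
    have hA : (C (a : ℂ) : ℂ[X]) = C T₁ + C T₂ + 2 := by
      have : (a : ℂ) = T₁ + T₂ + 2 := by linear_combination -hS
      rw [this]; simp only [C_add, C_sub, C_mul, C_1, hC2]
    have hB : (C (b : ℂ) : ℂ[X]) = C T₁ * C T₂ + 2 * C (a : ℂ) - 1 := by
      have : (b : ℂ) = T₁ * T₂ + 2 * a - 1 := by linear_combination -hP
      rw [this]; simp only [C_add, C_sub, C_mul, C_1, hC2]
    rw [hform]
    simp only [Polynomial.map_add, Polynomial.map_sub, Polynomial.map_mul, Polynomial.map_pow,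
      map_X, map_C, Polynomial.map_one, Complex.coe_algebraMap, Complex.ofReal_sub,
      Complex.ofReal_mul, Complex.ofReal_ofNat, C_sub, C_mul, hC2]
    rw [hB, hA]
    ring
  · intro s
    have : s ^ 2 - ((a : ℂ) - 2) * s + ((b : ℂ) - 2 * a + 1) = (s - T₁) * (s - T₂) := by
      rw [← hS, ← hP]; ring
    rw [this, mul_eq_zero, sub_eq_zero, sub_eq_zero]
end

section
/- Let n ≥ 2 and let M be an n×n matrix over a commutative ring. Then the coefficient of X^{n−2} in the characteristic polynomial det(XI − M) equals Σ_{i<j} (M_{ii}M_{jj} − M_{ij}M_{ji}), the sum of all 2×2 principal minors of M. -/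
open Polynomial

lemma det_pair_aux {n : ℕ} {R : Type*} [CommRing R] (M : Matrix (Fin n) (Fin n) R)
    (i j : Fin n) (h : i < j) (s : Finset (Fin n)) (hs : s = {i, j}) :
    (M.submatrix (fun x : s => (x : Fin n)) (fun x : s => (x : Fin n))).det
      = M i i * M j j - M i j * M j i := by
  subst hs
  have hb : Function.Bijective (fun k : Fin 2 =>
      (⟨![i, j] k, by fin_cases k <;> simp⟩ : ({i, j} : Finset (Fin n)))) := by
    constructor
    · intro a b hab
      have := congrArg Subtype.val hab
      fin_cases a <;> fin_cases b <;> simp_all [h.ne, h.ne']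
    · rintro ⟨x, hx⟩
      rcases Finset.mem_insert.mp hx with rfl | hx'
      · exact ⟨0, rfl⟩
      · exact ⟨1, Subtype.ext (Finset.mem_singleton.mp hx').symm⟩
  rw [← Matrix.det_submatrix_equiv_self (Equiv.ofBijective _ hb), Matrix.det_fin_two]
  simp

/-- For `n ≥ 2` and an `n × n` matrix `M` over a commutative ring, the coefficient of
`X^(n-2)` in the characteristic polynomial `det(XI - M)` equals the sum of all `2 × 2`
principal minors `Σ_{i<j} (M_{ii}M_{jj} - M_{ij}M_{ji})`. -/
theorem charpoly_coeff_sub_two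
    (n : ℕ) (hn : 2 ≤ n) (R : Type*) [CommRing R]
    (M : Matrix (Fin n) (Fin n) R) :
    M.charpoly.coeff (n - 2)
      = ∑ i : Fin n, ∑ j : Fin n, if i < j then M i i * M j j - M i j * M j i else 0 := by
  have key := M.charpoly_coeff_eq_sum_minors 2 (by simpa using hn)
  rw [Fintype.card_fin] at key
  rw [key, ← Fintype.sum_prod_type', ← Finset.sum_filter]
  simp only [even_two, Even.neg_pow, one_pow, one_mul]
  symm
  refine Finset.sum_bij (fun p _ => {p.1, p.2}) ?_ ?_ ?_ ?_
  · rintro ⟨i, j⟩ hp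
    have h : i < j := by simpa using hp
    simp [Finset.mem_powersetCard, Finset.card_pair h.ne]
  · rintro ⟨i, j⟩ hp ⟨k, l⟩ hq he
    have h : i < j := by simpa using hp
    have h' : k < l := by simpa using hq
    have e1 := congrArg (i ∈ ·) he
    have e2 := congrArg (j ∈ ·) he
    simp at e1 e2
    ext <;> simp <;> omega
  · intro s hs
    obtain ⟨a, b, hab, rfl⟩ := Finset.card_eq_two.mp (Finset.mem_powersetCard.mp hs).2
    rcases lt_or_gt_of_ne hab with h | h
    · exact ⟨(a, b), by simpa using h, rfl⟩
    · exact ⟨(b, a), by simpa using h, Finset.pair_comm _ _⟩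
  · rintro ⟨i, j⟩ hp
    have h : i < j := by simpa using hp
    exact (det_pair_aux M i j h _ rfl).symm
end

section
/- Let u ∈ ℝ³ ∖ Γ. Then the gradient of U at u equals the Newtonian force on the generating particle exerted by its symmetric copies: ∇U(u) = Σ_{R∈𝓡∖{I}} (Ru − u)/|Ru − u|³. -/
open scoped Classical

/-- Euclidean 3-space. -/
abbrev E3 : Type := EuclideanSpace ℝ (Fin 3)

/-- The collision set `Γ = {u : (R - I)u = 0 for some R ∈ 𝓡 \ {I}}` associated with a
subgroup `𝓡` of the orthogonal group of `ℝ³`. -/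
def collisionSet (𝓡 : Subgroup (E3 ≃ₗᵢ[ℝ] E3)) : Set E3 :=
  {u | ∃ R : 𝓡, (R : E3 ≃ₗᵢ[ℝ] E3) ≠ 1 ∧ (R : E3 ≃ₗᵢ[ℝ] E3) u = u}

/-- The potential `U(u) = (1/2) Σ_{R ∈ 𝓡 \ {I}} 1/|(R - I)u|`. -/
noncomputable def pot (𝓡 : Subgroup (E3 ≃ₗᵢ[ℝ] E3)) [Fintype 𝓡] (u : E3) : ℝ :=
  (1 / 2) * ∑ R : 𝓡, if (R : E3 ≃ₗᵢ[ℝ] E3) = 1 then 0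
    else ‖(R : E3 ≃ₗᵢ[ℝ] E3) u - u‖⁻¹

/-- The force exerted by the copy `R u`. -/
noncomputable def nForce (𝓡 : Subgroup (E3 ≃ₗᵢ[ℝ] E3)) (u : E3) (R : 𝓡) : E3 :=
  if (R : E3 ≃ₗᵢ[ℝ] E3) = 1 then 0
    else (‖(R : E3 ≃ₗᵢ[ℝ] E3) u - u‖ ^ 3)⁻¹ • ((R : E3 ≃ₗᵢ[ℝ] E3) u - u)

theorem inv_norm_deriv (A B : E3 ≃ₗᵢ[ℝ] E3) (hAB : ∀ x, A (B x) = x) (u : E3)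
    (h : A u ≠ u) :
    HasFDerivAt (fun v : E3 => ‖A v - v‖⁻¹)
      (InnerProductSpace.toDual ℝ E3 ((‖A u - u‖ ^ 3)⁻¹ • (A u - u)
        + (‖B u - u‖ ^ 3)⁻¹ • (B u - u))) u := by
  have hn : ‖B u - u‖ = ‖A u - u‖ := by
    rw [← A.norm_map (B u - u), map_sub, hAB, norm_sub_rev]
  have hpos : 0 < ‖A u - u‖ := norm_pos_iff.2 (sub_ne_zero.2 h)
  have hL : HasFDerivAt (fun v : E3 => A v - v)
      ((A.toContinuousLinearEquiv : E3 →L[ℝ] E3) - ContinuousLinearMap.id ℝ E3) u :=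
    ((A.toContinuousLinearEquiv : E3 →L[ℝ] E3) - ContinuousLinearMap.id ℝ E3).hasFDerivAt
  have h1 := (hL.norm_sq.sqrt (by positivity))
  simp only [Real.sqrt_sq (norm_nonneg _)] at h1
  have h2 := (hasDerivAt_inv hpos.ne').comp_hasFDerivAt u h1
  refine HasFDerivAt.congr_fderiv h2 ?_
  ext1 v
  have e1 : inner ℝ (A u) (A v) = inner ℝ u v := A.inner_map_map u v
  have e2 : inner ℝ u (A v) = inner ℝ (B u) v := by
    rw [← A.inner_map_map (B u) v, hAB]
  rw [hn]
  simp [inner_sub_left, inner_sub_right, e1, e2]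
  field_simp
  ring

/-- For `u ∉ Γ`, the gradient of `U` equals the Newtonian force exerted on the generating
particle by its symmetric copies: `∇U(u) = Σ_{R ∈ 𝓡\{I}} (Ru - u)/|Ru - u|³`. -/
theorem gradient_pot_eq_newtonian_force
    (𝓡 : Subgroup (E3 ≃ₗᵢ[ℝ] E3)) [Fintype 𝓡]
    (u : E3) (hu : u ∉ collisionSet 𝓡) :
    gradient (pot 𝓡) u
      = ∑ R : 𝓡, if (R : E3 ≃ₗᵢ[ℝ] E3) = 1 then 0
          else (‖(R : E3 ≃ₗᵢ[ℝ] E3) u - u‖ ^ 3)⁻¹ • ((R : E3 ≃ₗᵢ[ℝ] E3) u - u) := by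
  have key : ∀ R : 𝓡, HasFDerivAt
      (fun v : E3 => if (R : E3 ≃ₗᵢ[ℝ] E3) = 1 then (0 : ℝ)
        else ‖(R : E3 ≃ₗᵢ[ℝ] E3) v - v‖⁻¹)
      (InnerProductSpace.toDual ℝ E3 (nForce 𝓡 u R + nForce 𝓡 u R⁻¹)) u := by
    intro R
    by_cases h : (R : E3 ≃ₗᵢ[ℝ] E3) = 1
    · have h' : ((R⁻¹ : 𝓡) : E3 ≃ₗᵢ[ℝ] E3) = 1 := by simp [h]
      simp only [nForce, h, h', if_true, add_zero, map_zero]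
      exact hasFDerivAt_const _ _
    · have h' : ¬ ((R⁻¹ : 𝓡) : E3 ≃ₗᵢ[ℝ] E3) = 1 := by simpa using h
      simp only [nForce, h, h', if_false]
      refine inv_norm_deriv _ _ ?_ u ?_
      · intro x
        exact LinearIsometryEquiv.apply_symm_apply (R : E3 ≃ₗᵢ[ℝ] E3) x
      · intro h0
        exact hu ⟨R, h, h0⟩
  have hs := (HasFDerivAt.fun_sum (u := Finset.univ) (fun R _ => key R)).const_mul (1 / 2 : ℝ)
  have hg : HasGradientAt (pot 𝓡) (∑ R : 𝓡, nForce 𝓡 u R) u := by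
    rw [hasGradientAt_iff_hasFDerivAt]
    refine HasFDerivAt.congr_fderiv (f := pot 𝓡) hs ?_
    have hi : ∑ R : 𝓡, nForce 𝓡 u R⁻¹ = ∑ R : 𝓡, nForce 𝓡 u R :=
      Equiv.sum_comp (Equiv.inv 𝓡) (fun R => nForce 𝓡 u R)
    rw [← map_sum, Finset.sum_add_distrib, hi]
    rw [← two_smul ℝ, map_smulₛₗ, smul_smul]
    norm_num
  exact hg.gradient
end

section
/- Let A : ℝ → ℝ^{n×n} be continuous, let S be an invertible n×n real matrix, let τ > 0 and let M ≥ 1 be an integer with S^M = I. Assume A(t+τ) = S A(t) S⁻¹ for all t ∈ ℝ. Let Φ : ℝ → ℝ^{n×n} be the fundamental solution, i.e. Φ'(t) = A(t)Φ(t) for all t and Φ(0) = I. Then Φ(Mτ) = (S⁻¹ Φ(τ))^M; in particular the monodromy matrix over the period T = Mτ factors through the matrix S⁻¹Φ(T/M). -/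
open scoped Matrix.Norms.Operator in
theorem hasDerivAt_of_entries {n : ℕ} {F : ℝ → Matrix (Fin n) (Fin n) ℝ}
    {F' : Matrix (Fin n) (Fin n) ℝ} {t : ℝ}
    (h : ∀ i j, HasDerivAt (fun s => F s i j) (F' i j) t) : HasDerivAt F F' t := by
  have key : ∀ X : Matrix (Fin n) (Fin n) ℝ,
      X = ∑ i, ∑ j, X i j • Matrix.single i j (1 : ℝ) := by
    intro X
    conv_lhs => rw [Matrix.matrix_eq_sum_single X]
    simp
  have h2 : F = fun s => ∑ i, ∑ j, F s i j • Matrix.single i j (1 : ℝ) := by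
    funext s; exact key _
  rw [h2, key F']
  refine HasDerivAt.fun_sum fun i _ => HasDerivAt.fun_sum fun j _ => ?_
  exact (h i j).smul_const _

open scoped Matrix.Norms.Operator in
theorem linear_ode_zero {n : ℕ} {B D : ℝ → Matrix (Fin n) (Fin n) ℝ} (hB : Continuous B)
    (hD : ∀ t, HasDerivAt D (B t * D t) t) (h0 : D 0 = 0) (b : ℝ) (hb : 0 ≤ b) : D b = 0 := by
  obtain ⟨K, hK⟩ := (isCompact_Icc (a := (0 : ℝ)) (b := b)).exists_bound_of_continuousOn
    hB.continuousOn
  refine eq_zero_of_abs_deriv_le_mul_abs_self_of_eq_zero_right (f' := fun t => B t * D t) (K := K)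
    (fun t _ => (hD t).continuousAt.continuousWithinAt)
    (fun t _ => (hD t).hasDerivWithinAt) h0 ?_ b ⟨hb, le_rfl⟩
  intro x hx
  refine (norm_mul_le _ _).trans ?_
  gcongr
  exact hK x ⟨hx.1, hx.2.le⟩

open scoped Matrix.Norms.Operator in
theorem fundamental_shift
    {n : ℕ} {A : ℝ → Matrix (Fin n) (Fin n) ℝ} (hA : Continuous A)
    {S : Matrix (Fin n) (Fin n) ℝ} (hS : IsUnit S) {τ : ℝ}
    (hAper : ∀ t : ℝ, A (t + τ) = S * A t * S⁻¹)
    {Φ : ℝ → Matrix (Fin n) (Fin n) ℝ}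
    (hΦ0 : Φ 0 = 1)
    (hΦ : ∀ (t : ℝ) (i j : Fin n), HasDerivAt (fun s => Φ s i j) ((A t * Φ t) i j) t)
    (t : ℝ) (ht : 0 ≤ t) : Φ (t + τ) = S * Φ t * (S⁻¹ * Φ τ) := by
  have hdet : IsUnit S.det := (Matrix.isUnit_iff_isUnit_det S).1 hS
  have hd : ∀ t, HasDerivAt Φ (A t * Φ t) t := fun t => hasDerivAt_of_entries (hΦ t)
  have := linear_ode_zero (B := fun t => A (t + τ))
    (D := fun t => Φ (t + τ) - S * Φ t * (S⁻¹ * Φ τ)) (by fun_prop) ?_ ?_ t ht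
  · exact sub_eq_zero.1 this
  · intro t
    have h1 := (hd (t + τ)).comp_add_const t τ
    have h2 := ((hd t).const_mul S).mul_const (S⁻¹ * Φ τ)
    have e : A (t + τ) * (Φ (t + τ) - S * Φ t * (S⁻¹ * Φ τ)) =
        A (t + τ) * Φ (t + τ) - S * (A t * Φ t) * (S⁻¹ * Φ τ) := by
      rw [mul_sub]
      congr 1
      rw [hAper]
      simp only [mul_assoc]
      rw [Matrix.nonsing_inv_mul_cancel_left _ _ hdet]
    have h3 := h1.sub h2
    rw [← e] at h3
    exact h3
  · simp [hΦ0, Matrix.mul_nonsing_inv_cancel_left _ _ hdet]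


/-- Factorization of the monodromy matrix of a linear ODE with a symmetry:
if `A : ℝ → ℝ^{n×n}` is continuous, `S` is invertible with `S^M = I` (`M ≥ 1`),
`A(t+τ) = S A(t) S⁻¹` for all `t`, and `Φ` is the fundamental solution
(`Φ' = AΦ`, `Φ(0) = I`, entrywise), then `Φ(Mτ) = (S⁻¹ Φ(τ))^M`. -/
theorem monodromy_factorization
    (n : ℕ) (A : ℝ → Matrix (Fin n) (Fin n) ℝ) (hA : Continuous A)
    (S : Matrix (Fin n) (Fin n) ℝ) (hS : IsUnit S)
    (τ : ℝ) (hτ : 0 < τ)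
    (M : ℕ) (hM : 1 ≤ M) (hSM : S ^ M = 1)
    (hAper : ∀ t : ℝ, A (t + τ) = S * A t * S⁻¹)
    (Φ : ℝ → Matrix (Fin n) (Fin n) ℝ)
    (hΦ0 : Φ 0 = 1)
    (hΦ : ∀ (t : ℝ) (i j : Fin n), HasDerivAt (fun s => Φ s i j) ((A t * Φ t) i j) t) :
    Φ ((M : ℝ) * τ) = (S⁻¹ * Φ τ) ^ M := by
  have key : ∀ k : ℕ, Φ ((k : ℝ) * τ) = S ^ k * (S⁻¹ * Φ τ) ^ k := by
    intro k
    induction k with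
    | zero => simp [hΦ0]
    | succ k ih =>
      have h : ((k + 1 : ℕ) : ℝ) * τ = (k : ℝ) * τ + τ := by push_cast; ring
      rw [h, fundamental_shift hA hS hAper hΦ0 hΦ _ (by positivity), ih, pow_succ' S, pow_succ]
      simp only [mul_assoc]
  rw [key M, hSM, one_mul]
end
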